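/- Let X be a Banach function space over a finite measure space (S,𝒜,μ) and m : Σ → X a σ-additive vector measure. Assume: (a) both X and X* have the subsequence splitting property; (b) the range m(Σ) of m has uniformly a.c. norm in X. Then the Banach function space L¹(m), regarded as a B.f.s. over (Ω,Σ,η) for a Rybakov control measure η of m, has the subsequence splitting property. -/

import Mathlib

open MeasureTheory Filter Topology
open scoped ENNReal

noncomputable section

namespace Paper

variable {Ω : Type*} [MeasurableSpace Ω]
variable {X : Type*} [NormedAddCommGroup X] [NormedSpace ℝ X]

/-- The signed measure `x* ∘ m` for a functional `x*` and vector measure `m`. -/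
def dualApply (m : VectorMeasure Ω X) (x : X →L[ℝ] ℝ) : SignedMeasure Ω :=
  m.mapRange x.toLinearMap.toAddMonoidHom x.continuous

/-- The semivariation `‖m‖(A)` of a vector measure. -/
def semivar (m : VectorMeasure Ω X) (A : Set Ω) : ℝ≥0∞ :=
  ⨆ x : {x : X →L[ℝ] ℝ // ‖x‖ ≤ 1}, (dualApply m x.1).totalVariation A

/-- `P` holds `‖m‖`-almost everywhere. -/
def MAE (m : VectorMeasure Ω X) (P : Ω → Prop) : Prop :=
  ∃ N : Set Ω, MeasurableSet N ∧ semivar m N = 0 ∧ ∀ ω ∉ N, P ω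

/-- The integral `∫_A f ds` of a real function with respect to a signed measure. -/
def sIntegral (s : SignedMeasure Ω) (f : Ω → ℝ) (A : Set Ω) : ℝ :=
  (∫ ω in A, f ω ∂s.toJordanDecomposition.posPart) -
    ∫ ω in A, f ω ∂s.toJordanDecomposition.negPart

/-- `f` is integrable with respect to the vector measure `m` (Bartle-Dunford-Schwartz). -/
def MIntegrable (m : VectorMeasure Ω X) (f : Ω → ℝ) : Prop :=
  Measurable f ∧
  (∀ x : X →L[ℝ] ℝ, Integrable f ((dualApply m x).totalVariation)) ∧
  (∀ A : Set Ω, MeasurableSet A →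
    ∃ v : X, ∀ x : X →L[ℝ] ℝ, x v = sIntegral (dualApply m x) f A)

open Classical in
/-- The vector integral `∫_A f dm ∈ X`. -/
def mIntegral (m : VectorMeasure Ω X) (f : Ω → ℝ) (A : Set Ω) : X :=
  if h : ∃ v : X, ∀ x : X →L[ℝ] ℝ, x v = sIntegral (dualApply m x) f A then h.choose
  else 0

/-- The norm of `L¹(m)`: `‖f‖ = sup_{‖x*‖ ≤ 1} ∫ |f| d|x*m|`. -/
def mNorm (m : VectorMeasure Ω X) (f : Ω → ℝ) : ℝ :=
  ⨆ x : {x : X →L[ℝ] ℝ // ‖x‖ ≤ 1}, ∫ ω, |f ω| ∂(dualApply m x.1).totalVariation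

/-- The vector measure `m` is separable: the pseudometric space `(Σ, d_m)`,
`d_m(A,B) = ‖m‖(A △ B)`, is separable. -/
def SeparableVM (m : VectorMeasure Ω X) : Prop :=
  ∃ D : Set (Set Ω), D.Countable ∧ (∀ B ∈ D, MeasurableSet B) ∧
    ∀ A : Set Ω, MeasurableSet A → ∀ ε : ℝ, 0 < ε →
      ∃ B ∈ D, semivar m (symmDiff A B) < ENNReal.ofReal ε

section FunctionSpace

variable {S : Type*} [MeasurableSpace S]

/-- `T` is a bounded linear functional on the function space determined by the
membership predicate `mem` and the norm `nrm`. -/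
def IsBddLinFunctional (mem : (S → ℝ) → Prop) (nrm : (S → ℝ) → ℝ)
    (T : (S → ℝ) → ℝ) : Prop :=
  (∀ f g, mem f → mem g → T (f + g) = T f + T g) ∧
  (∀ (c : ℝ) (f), mem f → T (c • f) = c * T f) ∧
  (∃ C : ℝ, ∀ f, mem f → |T f| ≤ C * nrm f)

/-- `f` is a weakly null sequence in the function space `(mem, nrm)`. -/
def WeaklyNullSeq (mem : (S → ℝ) → Prop) (nrm : (S → ℝ) → ℝ) (f : ℕ → S → ℝ) : Prop :=
  ∀ T : (S → ℝ) → ℝ, IsBddLinFunctional mem nrm T →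
    Tendsto (fun n => T (f n)) atTop (nhds 0)

/-- The set `K` has uniformly absolutely continuous norm in the function space with
norm `nrm` over the measure `μ`. -/
def UnifACNorm (μ : Measure S) (nrm : (S → ℝ) → ℝ) (K : Set (S → ℝ)) : Prop :=
  ∀ ε : ℝ, 0 < ε → ∃ δ : ℝ, 0 < δ ∧ ∀ A : Set S, MeasurableSet A →
    μ A < ENNReal.ofReal δ → ∀ f ∈ K, nrm (A.indicator f) ≤ ε

/-- The subsequence splitting property for the function space `(mem, nrm)` over `μ`. -/
def HasSSP (μ : Measure S) (mem : (S → ℝ) → Prop) (nrm : (S → ℝ) → ℝ) : Prop :=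
  ∀ f : ℕ → S → ℝ, (∀ n, mem (f n)) → (∃ C : ℝ, ∀ n, nrm (f n) ≤ C) →
    ∃ σ : ℕ → ℕ, StrictMono σ ∧
      ∃ g h : ℕ → S → ℝ,
        (∀ n, mem (g n)) ∧ (∀ n, mem (h n)) ∧
        (∀ n, f (σ n) = g n + h n) ∧
        (∀ n, (fun s => g n s * h n s) =ᵐ[μ] 0) ∧
        UnifACNorm μ nrm (Set.range g) ∧
        (∀ i j, i ≠ j → (fun s => h i s * h j s) =ᵐ[μ] 0)

/-- The weak Banach-Saks property for the function space `(mem, nrm)`. -/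
def HasWBS (mem : (S → ℝ) → Prop) (nrm : (S → ℝ) → ℝ) : Prop :=
  ∀ f : ℕ → S → ℝ, (∀ n, mem (f n)) → WeaklyNullSeq mem nrm f →
    ∃ σ : ℕ → ℕ, StrictMono σ ∧
      Tendsto (fun n : ℕ => nrm ((n : ℝ)⁻¹ • ∑ k ∈ Finset.range n, f (σ k))) atTop (nhds 0)

end FunctionSpace

/-- A Banach function space over `(S, μ)`: an (abstract) normed space `X` together with
a linear embedding `J` into measurable functions on `S`, separating points modulo
`μ`-null sets and satisfying the ideal property. -/
structure BFS (S : Type*) [MeasurableSpace S] (μ : Measure S)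
    (X : Type*) [NormedAddCommGroup X] [NormedSpace ℝ X] where
  J : X →ₗ[ℝ] (S → ℝ)
  aemeasurable : ∀ x : X, AEMeasurable (J x) μ
  eq_zero : ∀ x : X, J x =ᵐ[μ] 0 → x = 0
  ideal : ∀ (x : X) (g : S → ℝ), AEMeasurable g μ →
    (∀ᵐ s ∂μ, |g s| ≤ |J x s|) → ∃ y : X, J y =ᵐ[μ] g ∧ ‖y‖ ≤ ‖x‖

variable {S : Type*} [MeasurableSpace S] {μ : Measure S}

/-- The set `K ⊆ X` has uniformly absolutely continuous norm in the B.f.s. `X`. -/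
def BFS.UnifAC (B : BFS S μ X) (K : Set X) : Prop :=
  ∀ ε : ℝ, 0 < ε → ∃ δ : ℝ, 0 < δ ∧ ∀ A : Set S, MeasurableSet A →
    μ A < ENNReal.ofReal δ → ∀ x ∈ K, ∀ y : X, B.J y =ᵐ[μ] A.indicator (B.J x) → ‖y‖ ≤ ε

/-- The B.f.s. `X` has absolutely continuous norm. -/
def BFS.ACNorm (B : BFS S μ X) : Prop :=
  ∀ x : X, ∀ ε : ℝ, 0 < ε → ∃ δ : ℝ, 0 < δ ∧ ∀ A : Set S, MeasurableSet A →
    μ A < ENNReal.ofReal δ → ∀ y : X, B.J y =ᵐ[μ] A.indicator (B.J x) → ‖y‖ ≤ ε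

/-- The subsequence splitting property for the B.f.s. `X`. -/
def BFS.SSP (B : BFS S μ X) : Prop :=
  ∀ f : ℕ → X, (∃ C : ℝ, ∀ n, ‖f n‖ ≤ C) →
    ∃ σ : ℕ → ℕ, StrictMono σ ∧
      ∃ g h : ℕ → X,
        (∀ n, f (σ n) = g n + h n) ∧
        (∀ n, (fun s => B.J (g n) s * B.J (h n) s) =ᵐ[μ] 0) ∧
        B.UnifAC (Set.range g) ∧
        (∀ i j, i ≠ j → (fun s => B.J (h i) s * B.J (h j) s) =ᵐ[μ] 0)

/-- The weak Banach-Saks property for a normed space `Z`: every weakly null sequence has a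
subsequence whose arithmetic means converge to zero in norm. -/
def WeakBanachSaks (Z : Type*) [NormedAddCommGroup Z] [NormedSpace ℝ Z] : Prop :=
  ∀ z : ℕ → Z, (∀ φ : Z →L[ℝ] ℝ, Tendsto (fun n => φ (z n)) atTop (nhds 0)) →
    ∃ σ : ℕ → ℕ, StrictMono σ ∧
      Tendsto (fun n : ℕ => ‖(n : ℝ)⁻¹ • ∑ k ∈ Finset.range n, z (σ k)‖) atTop (nhds 0)

/-!
Let the rows of an array in `X` have uniformly bounded signed sums. By Khintchine's inequality the
square functions of the rows are bounded in `X`; splitting them shows that if, moreover, the columns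
have uniformly a.c. norm, then the entries cannot all have norm at least `ε`.

Apply this to the vectors `∫_A f dm` with `A` running through disjoint sets. For a single `f` it
yields that the norm of `L¹(m)` is absolutely continuous. For a bounded sequence `f n` and slices
`A j = {k j < |f n| ≤ k (j + 1)}`, whose columns are uniformly a.c. because the range of `m` is, it
yields a subsequence along which the part of `f l` with `k < |f l| ≤ 2 ^ l` is uniformly small for
large `k`. The sets `{|f l| > 2 ^ l}` have summable measure, so along a further subsequence each of
them can be cut down by the union of the later ones at a vanishing cost in norm. This makes them
disjoint, and restricting `f l` to these sets and to their complements gives the splitting.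
-/

theorem BFS.ext_of_ae_eq (B : BFS S μ X) {x y : X} (h : B.J x =ᵐ[μ] B.J y) : x = y := by
  rw [← sub_eq_zero]
  apply B.eq_zero
  filter_upwards [h] with s hs
  simp [hs]

theorem BFS.norm_le_of_abs_le (B : BFS S μ X) {x y : X}
    (h : ∀ᵐ s ∂μ, |B.J x s| ≤ |B.J y s|) : ‖x‖ ≤ ‖y‖ := by
  obtain ⟨z, hz, hzy⟩ := B.ideal y (B.J x) (B.aemeasurable x) h
  rwa [← B.ext_of_ae_eq hz]

theorem BFS.exists_abs (B : BFS S μ X) (x : X) :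
    ∃ y : X, B.J y =ᵐ[μ] (fun s => |B.J x s|) ∧ ‖y‖ ≤ ‖x‖ :=
  B.ideal x _ (B.aemeasurable x).abs (by simp)

theorem BFS.norm_le_add_of_abs_le_add (B : BFS S μ X) {x y z : X}
    (h : ∀ᵐ s ∂μ, |B.J x s| ≤ |B.J y s| + |B.J z s|) : ‖x‖ ≤ ‖y‖ + ‖z‖ := by
  obtain ⟨y', hy, hyn⟩ := B.exists_abs y
  obtain ⟨z', hz, hzn⟩ := B.exists_abs z
  calc
    ‖x‖ ≤ ‖y' + z'‖ := by
      apply B.norm_le_of_abs_le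
      filter_upwards [h, hy, hz] with s hs hys hzs
      simpa only [map_add, Pi.add_apply, hys, hzs] using hs.trans (le_abs_self _)
    _ ≤ ‖y'‖ + ‖z'‖ := norm_add_le y' z'
    _ ≤ ‖y‖ + ‖z‖ := add_le_add hyn hzn

theorem BFS.exists_indicator (B : BFS S μ X) {A : Set S} (hA : MeasurableSet A) (x : X) :
    ∃ y : X, B.J y =ᵐ[μ] A.indicator (B.J x) ∧ ‖y‖ ≤ ‖x‖ :=
  B.ideal x _ ((B.aemeasurable x).indicator hA) <|
    Eventually.of_forall fun s => by simpa using norm_indicator_le_norm_self (B.J x) s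

/-- The band projection `x ↦ x χ_A` of a Banach function space. The ideal property only provides
some element whose function is a.e. equal to `x χ_A`; separation of points makes it unique, hence
the projection linear. -/
def BFS.restrict (B : BFS S μ X) {A : Set S} (hA : MeasurableSet A) : X →L[ℝ] X :=
  LinearMap.mkContinuous
    { toFun := fun x => (B.exists_indicator hA x).choose
      map_add' := fun x y => by
        apply B.ext_of_ae_eq
        filter_upwards [(B.exists_indicator hA (x + y)).choose_spec.1,
          (B.exists_indicator hA x).choose_spec.1,
          (B.exists_indicator hA y).choose_spec.1] with s hxy hx hy
        refine hxy.trans ?_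
        by_cases hs : s ∈ A <;> simp [hx, hy, hs]
      map_smul' := fun c x => by
        apply B.ext_of_ae_eq
        filter_upwards [(B.exists_indicator hA (c • x)).choose_spec.1,
          (B.exists_indicator hA x).choose_spec.1] with s hcx hx
        refine hcx.trans ?_
        by_cases hs : s ∈ A <;> simp [hx, hs] }
    1 fun x => by simpa using (B.exists_indicator hA x).choose_spec.2

theorem BFS.restrict_ae_eq (B : BFS S μ X) {A : Set S} (hA : MeasurableSet A) (x : X) :
    B.J (B.restrict hA x) =ᵐ[μ] A.indicator (B.J x) :=
  (B.exists_indicator hA x).choose_spec.1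

theorem BFS.restrict_add_restrict_compl (B : BFS S μ X) {A : Set S} (hA : MeasurableSet A)
    (x : X) : B.restrict hA x + B.restrict hA.compl x = x := by
  apply B.ext_of_ae_eq
  filter_upwards [B.restrict_ae_eq hA x, B.restrict_ae_eq hA.compl x] with s hs hs'
  rw [map_add, Pi.add_apply, hs, hs', Set.indicator_self_add_compl_apply]

theorem BFS.unifAC_iff (B : BFS S μ X) {K : Set X} :
    B.UnifAC K ↔ ∀ ε : ℝ, 0 < ε → ∃ δ : ℝ, 0 < δ ∧ ∀ (A : Set S) (hA : MeasurableSet A),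
      μ A < ENNReal.ofReal δ → ∀ x ∈ K, ‖B.restrict hA x‖ ≤ ε := by
  refine forall₂_congr fun ε _ => exists_congr fun δ => and_congr_right fun _ =>
    forall₃_congr fun A hA _ => forall₂_congr fun x _ =>
      ⟨fun h => h _ (B.restrict_ae_eq hA x), fun h y hy => ?_⟩
  rwa [B.ext_of_ae_eq (hy.trans (B.restrict_ae_eq hA x).symm)]

/-! ### Sign averages and Khintchine's inequality -/

/-- The average of `F (x + ∑ j < n, θ j • v j)` over all choices of signs `θ j = ±1`, as a function
of `n` and `x`. The recursion averages over the last sign, so that no probability space is needed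
and averages can be formed inside any real vector space. -/
def signAverage {V W : Type*} [AddCommGroup V] [AddCommGroup W] [Module ℝ W]
    (v : ℕ → V) (F : V → W) : ℕ → V → W
  | 0, x => F x
  | n + 1, x => (1 / 2 : ℝ) • (signAverage v F n (x + v n) + signAverage v F n (x - v n))

section SignAverage

variable (b : ℕ → ℝ) (n : ℕ) (x : ℝ)

theorem signAverage_sq :
    signAverage b (fun y => y ^ 2) n x = x ^ 2 + ∑ j ∈ Finset.range n, b j ^ 2 := by
  induction n generalizing x with
  | zero => simp [signAverage]
  | succ n ih => simp only [signAverage, ih, Finset.sum_range_succ, smul_eq_mul]; ring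

theorem signAverage_pow_four_le :
    signAverage b (fun y => y ^ 4) n x ≤
      x ^ 4 + 6 * x ^ 2 * (∑ j ∈ Finset.range n, b j ^ 2)
        + 3 * (∑ j ∈ Finset.range n, b j ^ 2) ^ 2 := by
  induction n generalizing x with
  | zero => simp [signAverage]
  | succ n ih =>
    simp only [signAverage, Finset.sum_range_succ, smul_eq_mul]
    nlinarith [ih (x + b n), ih (x - b n), sq_nonneg (b n ^ 2)]

theorem mul_signAverage_sub_le {F G H : ℝ → ℝ} {α β : ℝ} (h : ∀ y, α * F y - G y ≤ β * H y) :
    α * signAverage b F n x - signAverage b G n x ≤ β * signAverage b H n x := by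
  induction n generalizing x with
  | zero => exact h x
  | succ n ih =>
    simp only [signAverage, smul_eq_mul]
    linarith [ih (x + b n), ih (x - b n)]

theorem three_mul_sq_sub_pow_four_le {r : ℝ} (hr : 0 ≤ r) (y : ℝ) :
    3 * r ^ 2 * y ^ 2 - y ^ 4 ≤ 2 * r ^ 3 * |y| := by
  have hfactor : 0 ≤ |y| * (|y| + 2 * r) * (|y| - r) ^ 2 := by positivity
  rw [← sq_abs y, ← Even.pow_abs (by decide : Even 4) y]
  linear_combination hfactor

/-- Khintchine's inequality with the constant `√3`, by comparing `|y|` with the polynomial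
`3 r² y² - y⁴` for `r² = 3 ∑ b j ^ 2`. -/
theorem sum_sq_le_three_mul_signAverage_abs_sq :
    ∑ j ∈ Finset.range n, b j ^ 2 ≤ 3 * signAverage b (fun y => |y|) n 0 ^ 2 := by
  set Q := ∑ j ∈ Finset.range n, b j ^ 2 with hQ
  set E := signAverage b (fun y => |y|) n 0
  have hQ0 : 0 ≤ Q := Finset.sum_nonneg fun j _ => sq_nonneg _
  obtain ⟨r, hr, hrQ⟩ : ∃ r : ℝ, 0 ≤ r ∧ r ^ 2 = 3 * Q :=
    ⟨√(3 * Q), Real.sqrt_nonneg _, Real.sq_sqrt (by positivity)⟩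
  have hmoments : 6 * Q ^ 2 ≤ 2 * r ^ 3 * E := by
    have havg := mul_signAverage_sub_le b n 0 (three_mul_sq_sub_pow_four_le hr)
    have hsq := signAverage_sq b n 0
    have hfour := signAverage_pow_four_le b n 0
    rw [← hQ] at hsq hfour
    rw [hsq] at havg
    nlinarith
  rcases hQ0.eq_or_lt with hzero | hpos
  · rw [← hzero]; positivity
  have hQrE : Q ≤ r * E := by
    have : Q * Q ≤ Q * (r * E) := by
      have : r ^ 3 = 3 * Q * r := by rw [← hrQ]; ring
      rw [this] at hmoments
      linarith
    exact le_of_mul_le_mul_left this hpos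
  have hsquare : Q * Q ≤ Q * (3 * E ^ 2) := by
    calc Q * Q ≤ (r * E) * (r * E) := mul_self_le_mul_self hQ0 hQrE
      _ = Q * (3 * E ^ 2) := by rw [← pow_two, mul_pow, hrQ]; ring
  exact le_of_mul_le_mul_left hsquare hpos

end SignAverage

theorem norm_signAverage_le {V W : Type*} [AddCommGroup V] [Module ℝ V]
    [NormedAddCommGroup W] [NormedSpace ℝ W] (v : ℕ → V) (F : V → W) {C : ℝ} {n : ℕ} {x : V}
    (h : ∀ θ : ℕ → ℝ, (∀ j, |θ j| = 1) → ‖F (x + ∑ j ∈ Finset.range n, θ j • v j)‖ ≤ C) :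
    ‖signAverage v F n x‖ ≤ C := by
  induction n generalizing x with
  | zero => simpa [signAverage] using h 1 (by simp)
  | succ n ih =>
    have hsign : ∀ e : ℝ, |e| = 1 → ‖signAverage v F n (x + e • v n)‖ ≤ C := by
      refine fun e he => ih fun θ hθ => ?_
      have hsum : ∑ j ∈ Finset.range n, Function.update θ n e j • v j =
          ∑ j ∈ Finset.range n, θ j • v j :=
        Finset.sum_congr rfl fun j hj => by
          rw [Function.update_of_ne (Finset.mem_range.mp hj).ne]
      have hupdate := h (Function.update θ n e) fun j => by
        rcases eq_or_ne j n with rfl | hj <;> simp [*]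
      rwa [Finset.sum_range_succ, hsum, Function.update_self, add_comm (Finset.sum _ _),
        ← add_assoc] at hupdate
    have hplus : ‖signAverage v F n (x + v n)‖ ≤ C := by simpa using hsign 1 (by simp)
    have hminus : ‖signAverage v F n (x - v n)‖ ≤ C := by
      simpa [← sub_eq_add_neg] using hsign (-1) (by simp)
    calc
      ‖signAverage v F (n + 1) x‖
          ≤ 1 / 2 * (‖signAverage v F n (x + v n)‖ + ‖signAverage v F n (x - v n)‖) := by
        rw [signAverage, norm_smul, Real.norm_of_nonneg (by norm_num)]
        gcongr
        exact norm_add_le _ _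
      _ ≤ C := by linarith

theorem BFS.signAverage_ae_eq (B : BFS S μ X) (v : ℕ → X) {F : X → X} {φ : ℝ → ℝ}
    (hF : ∀ x, B.J (F x) =ᵐ[μ] fun s => φ (B.J x s)) (n : ℕ) (x : X) :
    B.J (signAverage v F n x) =ᵐ[μ]
      fun s => signAverage (fun j => B.J (v j) s) φ n (B.J x s) := by
  induction n generalizing x with
  | zero => exact hF x
  | succ n ih =>
    filter_upwards [ih (x + v n), ih (x - v n)] with s hplus hminus
    simp only [signAverage, map_smul, map_add, map_sub, Pi.smul_apply, Pi.add_apply,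
      Pi.sub_apply] at *
    rw [hplus, hminus]

theorem BFS.exists_sum_sq_le_sq (B : BFS S μ X) (v : ℕ → X) {C : ℝ} {n : ℕ}
    (h : ∀ θ : ℕ → ℝ, (∀ j, |θ j| = 1) → ‖∑ j ∈ Finset.range n, θ j • v j‖ ≤ C) :
    ∃ q : X, ‖q‖ ≤ √3 * C ∧
      ∀ᵐ s ∂μ, ∑ j ∈ Finset.range n, B.J (v j) s ^ 2 ≤ B.J q s ^ 2 := by
  choose abs habs hnorm using B.exists_abs
  refine ⟨√3 • signAverage v abs n 0, ?_, ?_⟩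
  · rw [norm_smul, Real.norm_of_nonneg (Real.sqrt_nonneg 3)]
    gcongr
    exact norm_signAverage_le v abs fun θ hθ => (hnorm _).trans (by simpa using h θ hθ)
  · filter_upwards [B.signAverage_ae_eq v habs n 0] with s hs
    have hkhintchine := sum_sq_le_three_mul_signAverage_abs_sq (fun j => B.J (v j) s) n
    rw [map_smul, Pi.smul_apply, hs, smul_eq_mul, mul_pow, Real.sq_sqrt (by norm_num)]
    simpa using hkhintchine

/-! ### Arrays in spaces with the subsequence splitting property -/

theorem card_filter_lt_le_of_sum_sq_le {ι : Type*} {s : Finset ι} {w : ι → ℝ} {a t : ℝ}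
    (ht : 0 < t) (h : ∑ j ∈ s, w j ^ 2 ≤ a ^ 2) :
    ((s.filter fun j => t * |a| < |w j|).card : ℝ) ≤ 1 / t ^ 2 := by
  set big := s.filter fun j => t * |a| < |w j|
  have hsum : (big.card : ℝ) * (t * a) ^ 2 ≤ a ^ 2 := by
    calc
      (big.card : ℝ) * (t * a) ^ 2 = ∑ j ∈ big, (t * a) ^ 2 := by simp
      _ ≤ ∑ j ∈ big, w j ^ 2 := by
        refine Finset.sum_le_sum fun j hj => sq_le_sq.mpr ?_
        rw [abs_mul, abs_of_pos ht]
        exact (Finset.mem_filter.mp hj).2.le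
      _ ≤ ∑ j ∈ s, w j ^ 2 :=
        Finset.sum_le_sum_of_subset_of_nonneg (Finset.filter_subset _ _) fun _ _ _ => sq_nonneg _
      _ ≤ a ^ 2 := h
  rcases eq_or_ne a 0 with rfl | ha
  · have hw : ∀ j ∈ s, w j = 0 := fun j hj => by
      have := (Finset.single_le_sum (fun i _ => sq_nonneg (w i)) hj).trans h
      nlinarith
    have hbig : big = ∅ := Finset.filter_eq_empty_iff.mpr fun j hj => by simp [hw j hj]
    simp [hbig, ht.le]
  · rw [mul_pow, ← mul_assoc] at hsum
    rw [le_div_iff₀ (by positivity)]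
    exact le_of_mul_le_mul_right (hsum.trans_eq (one_mul _).symm) (by positivity)

theorem sum_measureReal_lt_le_of_sum_sq_le [IsFiniteMeasure μ] {ι : Type*} {s : Finset ι}
    {w : ι → S → ℝ} {a : S → ℝ} (hw : ∀ j, AEMeasurable (w j) μ) (ha : AEMeasurable a μ) {t : ℝ}
    (ht : 0 < t) (h : ∀ᵐ x ∂μ, ∑ j ∈ s, w j x ^ 2 ≤ a x ^ 2) :
    ∑ j ∈ s, μ.real {x | t * |a x| < |w j x|} ≤ 1 / t ^ 2 * μ.real Set.univ := by
  have hnull : ∀ j, NullMeasurableSet {x | t * |a x| < |w j x|} μ := fun j =>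
    nullMeasurableSet_lt (ha.abs.const_mul t) (hw j).abs
  have hint : ∀ j ∈ s, Integrable ({x | t * |a x| < |w j x|}.indicator fun _ => (1 : ℝ)) μ :=
    fun j _ => (integrable_const 1).indicator₀ (hnull j)
  calc
    ∑ j ∈ s, μ.real {x | t * |a x| < |w j x|}
        = ∫ x, ∑ j ∈ s, {x | t * |a x| < |w j x|}.indicator (fun _ => (1 : ℝ)) x ∂μ := by
      rw [integral_finsetSum _ hint]
      exact Finset.sum_congr rfl fun j _ => by rw [integral_indicator₀ (hnull j)]; simp
    _ ≤ ∫ _, 1 / t ^ 2 ∂μ := by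
      refine integral_mono_ae (integrable_finsetSum _ hint) (integrable_const _) ?_
      filter_upwards [h] with x hx
      simpa [Set.indicator_apply] using card_filter_lt_le_of_sum_sq_le ht hx
    _ = 1 / t ^ 2 * μ.real Set.univ := by rw [integral_const, smul_eq_mul, mul_comm]

theorem BFS.norm_le_norm_restrict_add (B : BFS S μ X) {a w : X} {E : Set S} {t : ℝ}
    (ht : 0 ≤ t) (hE : MeasurableSet E) (hwa : ∀ᵐ s ∂μ, |B.J w s| ≤ |B.J a s|)
    (hsmall : ∀ s ∉ E, |B.J w s| ≤ t * |B.J a s|) : ‖w‖ ≤ ‖B.restrict hE a‖ + t * ‖a‖ := by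
  rw [← Real.norm_of_nonneg ht, ← norm_smul]
  apply B.norm_le_add_of_abs_le_add
  filter_upwards [hwa, B.restrict_ae_eq hE a] with s hs hrestrict
  rw [hrestrict, map_smul, Pi.smul_apply, smul_eq_mul, abs_mul, abs_of_nonneg ht]
  by_cases hsE : s ∈ E
  · rw [Set.indicator_of_mem hsE]
    exact le_add_of_le_of_nonneg hs (by positivity)
  · rw [Set.indicator_of_notMem hsE, abs_zero, zero_add]
    exact hsmall s hsE

theorem BFS.UnifAC.exists_norm_lt_of_sum_sq_le [IsFiniteMeasure μ] {B : BFS S μ X} {K : Set X}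
    (hK : B.UnifAC K) {C : ℝ} (hC : ∀ a ∈ K, ‖a‖ ≤ C) {ε : ℝ} (hε : 0 < ε) :
    ∃ N : ℕ, ∀ a ∈ K, ∀ w : ℕ → X,
      (∀ᵐ s ∂μ, ∑ j ∈ Finset.range N, B.J (w j) s ^ 2 ≤ B.J a s ^ 2) →
        ∃ j < N, ‖w j‖ < ε := by
  obtain ⟨t, ht, htC⟩ : ∃ t : ℝ, 0 < t ∧ t * |C| < ε / 2 :=
    ⟨ε / (2 * (|C| + 1)), by positivity, by
      rw [div_mul_eq_mul_div, div_lt_div_iff₀ (by positivity) two_pos]; nlinarith⟩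
  obtain ⟨δ, hδ, hac⟩ := B.unifAC_iff.mp hK (ε / 2) (half_pos hε)
  obtain ⟨N, hN⟩ := exists_nat_gt (1 / t ^ 2 * μ.real Set.univ / δ)
  rw [div_lt_iff₀ hδ] at hN
  refine ⟨N, fun a ha w hw => ?_⟩
  by_contra! hlarge
  have hdom : ∀ j ∈ Finset.range N, ∀ᵐ s ∂μ, |B.J (w j) s| ≤ |B.J a s| := fun j hj => by
    filter_upwards [hw] with s hs
    exact sq_le_sq.mp
      ((Finset.single_le_sum (f := fun i => B.J (w i) s ^ 2) (fun i _ => sq_nonneg _) hj).trans hs)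
  have hmeasure : ∀ j ∈ Finset.range N, δ ≤ μ.real {s | t * |B.J a s| < |B.J (w j) s|} := by
    intro j hj
    set E := {s | t * |B.J a s| < |B.J (w j) s|}
    by_contra! hlt
    have hEδ : μ (toMeasurable μ E) < ENNReal.ofReal δ := by
      rwa [measure_toMeasurable, ← ofReal_measureReal, ENNReal.ofReal_lt_ofReal_iff hδ]
    have hnorm := B.norm_le_norm_restrict_add ht.le (measurableSet_toMeasurable μ E) (hdom j hj)
      fun s hs => not_lt.mp fun hsE => hs (subset_toMeasurable μ E hsE)
    have htail : t * ‖a‖ ≤ t * |C| := by gcongr; exact (hC a ha).trans (le_abs_self C)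
    linarith [hlarge j (Finset.mem_range.mp hj), hac _ (measurableSet_toMeasurable μ E) hEδ a ha]
  have hlower : N * δ ≤ ∑ j ∈ Finset.range N, μ.real {s | t * |B.J a s| < |B.J (w j) s|} := by
    simpa using Finset.card_nsmul_le_sum _ _ _ hmeasure
  linarith [sum_measureReal_lt_le_of_sum_sq_le (fun j => B.aemeasurable (w j)) (B.aemeasurable a)
    ht hw]

theorem tendsto_measure_support_of_pairwise_mul_eq_zero [IsFiniteMeasure μ] {f : ℕ → S → ℝ}
    (hf : ∀ n, AEMeasurable (f n) μ)
    (hdisj : ∀ i j, i ≠ j → (fun s => f i s * f j s) =ᵐ[μ] 0) :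
    Tendsto (fun n => μ (Function.support (f n))) atTop (𝓝 0) := by
  have haedisj : Pairwise (Function.onFun (AEDisjoint μ) fun n => Function.support (f n)) := by
    intro i j hij
    refine measure_eq_zero_iff_ae_notMem.mpr ?_
    filter_upwards [hdisj i j hij] with s hs hmem
    exact mul_ne_zero hmem.1 hmem.2 hs
  refine ENNReal.tendsto_atTop_zero_of_tsum_ne_top
    (ne_top_of_le_ne_top (measure_ne_top μ Set.univ) ?_)
  exact tsum_measure_le_measure_univ
    (fun n => (hf n).aestronglyMeasurable.nullMeasurableSet_support) haedisj

/-- Splitting the constant sequence `x`, almost everywhere one of the first two disjoint parts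
vanishes, so that `x` is dominated by the corresponding uniformly a.c. parts. -/
theorem BFS.SSP.unifAC_singleton {B : BFS S μ X} (hX : B.SSP) (x : X) : B.UnifAC {x} := by
  obtain ⟨σ, -, g, h, hsplit, -, hg, hh⟩ := hX (fun _ => x) ⟨‖x‖, fun _ => le_rfl⟩
  rw [B.unifAC_iff] at hg ⊢
  intro ε hε
  obtain ⟨δ, hδ, hac⟩ := hg (ε / 2) (half_pos hε)
  refine ⟨δ, hδ, fun A hA hμA _ hx => ?_⟩
  rw [Set.mem_singleton_iff.mp hx]
  have hdom : ‖B.restrict hA x‖ ≤ ‖B.restrict hA (g 0)‖ + ‖B.restrict hA (g 1)‖ := by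
    apply B.norm_le_add_of_abs_le_add
    filter_upwards [B.restrict_ae_eq hA x, B.restrict_ae_eq hA (g 0), B.restrict_ae_eq hA (g 1),
      hh 0 1 zero_ne_one] with s hxs hg0 hg1 hdisj
    have hvalue : ∀ n, B.J x s = B.J (g n) s + B.J (h n) s := fun n => by
      rw [← Pi.add_apply, ← map_add, ← hsplit n]
    rw [hxs, hg0, hg1]
    by_cases hs : s ∈ A
    · simp only [Set.indicator_of_mem hs]
      rcases mul_eq_zero.mp hdisj with h0 | h1
      · simp [hvalue 0, h0]
      · simp [hvalue 1, h1]
    · simp [hs]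
  linarith [hac A hA hμA _ ⟨0, rfl⟩, hac A hA hμA _ ⟨1, rfl⟩]

theorem BFS.norm_le_norm_add_of_mul_ae_eq_zero (B : BFS S μ X) {x y : X}
    (h : (fun s => B.J x s * B.J y s) =ᵐ[μ] 0) : ‖x‖ ≤ ‖x + y‖ := by
  apply B.norm_le_of_abs_le
  filter_upwards [h] with s hs
  rcases mul_eq_zero.mp hs with h | h <;> simp [h]

theorem BFS.sum_sq_restrict_compl_le (B : BFS S μ X) {v : ℕ → X} {a d : X} {D : Set S}
    (hD : MeasurableSet D) (hd : Function.support (B.J d) ⊆ D) {n N : ℕ} (hN : N ≤ n)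
    (h : ∀ᵐ s ∂μ, ∑ j ∈ Finset.range n, B.J (v j) s ^ 2 ≤ B.J (a + d) s ^ 2) :
    ∀ᵐ s ∂μ, ∑ j ∈ Finset.range N, B.J (B.restrict hD.compl (v j)) s ^ 2 ≤ B.J a s ^ 2 := by
  filter_upwards [h, ae_all_iff.mpr fun j => B.restrict_ae_eq hD.compl (v j)] with s hs hrestrict
  simp only [hrestrict]
  by_cases hsD : s ∈ D
  · simpa [hsD] using sq_nonneg (B.J a s)
  · have hds : B.J d s = 0 := Function.notMem_support.mp fun hmem => hsD (hd hmem)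
    rw [map_add, Pi.add_apply, hds, add_zero] at hs
    simp only [Set.indicator_of_mem (Set.mem_compl hsD)]
    exact (Finset.sum_le_sum_of_subset_of_nonneg (Finset.range_mono hN)
      fun _ _ _ => sq_nonneg _).trans hs

/-- The square functions of the rows are bounded, so they split as `a n + d n`. Off the support of
`d n` they are dominated by the uniformly a.c. `a n`, which forces some entry to be small there;
on the support, whose measure tends to `0`, the entries are small because the columns are
uniformly a.c. -/
theorem BFS.SSP.exists_norm_lt_of_norm_sum_le [IsFiniteMeasure μ] {B : BFS S μ X} (hX : B.SSP)
    {v : ℕ → ℕ → X} {C : ℝ}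
    (hsums : ∀ n, ∀ θ : ℕ → ℝ, (∀ j, |θ j| = 1) → ‖∑ j ∈ Finset.range n, θ j • v n j‖ ≤ C)
    (hcols : ∀ j, B.UnifAC (Set.range fun n => v n j)) {ε : ℝ} (hε : 0 < ε) :
    ∃ n, ∃ j < n, ‖v n j‖ < ε := by
  choose q hqC hq using fun n => B.exists_sum_sq_le_sq (v n) (hsums n)
  obtain ⟨σ, hσ, a, d, hsplit, had, ha, hd⟩ := hX q ⟨_, hqC⟩
  have haC : ∀ x ∈ Set.range a, ‖x‖ ≤ √3 * C := by
    rintro _ ⟨n, rfl⟩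
    exact (B.norm_le_norm_add_of_mul_ae_eq_zero (had n)).trans (hsplit n ▸ hqC (σ n))
  obtain ⟨N, hN⟩ := ha.exists_norm_lt_of_sum_sq_le haC (half_pos hε)
  choose δ hδ hcol using fun j => B.unifAC_iff.mp (hcols j) (ε / 2) (half_pos hε)
  let D : ℕ → Set S := fun n => toMeasurable μ (Function.support (B.J (d n)))
  have hDm : ∀ n, MeasurableSet (D n) := fun n => measurableSet_toMeasurable μ _
  have hD : Tendsto (fun n => μ (D n)) atTop (𝓝 0) := by
    simpa only [D, measure_toMeasurable] using
      tendsto_measure_support_of_pairwise_mul_eq_zero (fun n => B.aemeasurable (d n)) hd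
  have hDδ : ∀ᶠ n in atTop, ∀ j ∈ Finset.range N, μ (D n) < ENNReal.ofReal (δ j) :=
    (eventually_all_finset _).mpr fun j _ => hD.eventually_lt_const (by simpa using hδ j)
  obtain ⟨n, hDn, hNn⟩ := (hDδ.and (hσ.tendsto_atTop.eventually_ge_atTop N)).exists
  have hoff := B.sum_sq_restrict_compl_le (hDm n) (subset_toMeasurable μ _) hNn
    (hsplit n ▸ hq (σ n))
  obtain ⟨j, hjN, hj⟩ := hN (a n) ⟨n, rfl⟩ _ hoff
  have hon := hcol j (D n) (hDm n) (hDn j (Finset.mem_range.mpr hjN)) _ ⟨σ n, rfl⟩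
  refine ⟨σ n, j, hjN.trans_le hNn, ?_⟩
  calc
    ‖v (σ n) j‖ = ‖B.restrict (hDm n) (v (σ n) j) + B.restrict (hDm n).compl (v (σ n) j)‖ := by
      rw [B.restrict_add_restrict_compl]
    _ ≤ ‖B.restrict (hDm n) (v (σ n) j)‖ + ‖B.restrict (hDm n).compl (v (σ n) j)‖ :=
      norm_add_le _ _
    _ < ε := by linarith

/-! ### Integration with respect to a vector measure -/

theorem exists_sIntegral_eq_setIntegral_mul (s : SignedMeasure Ω) :
    ∃ θ : Ω → ℝ, Measurable θ ∧ (∀ ω, |θ ω| = 1) ∧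
      ∀ (f : Ω → ℝ) (A : Set Ω), Integrable f s.totalVariation →
        sIntegral s f A = ∫ ω in A, f ω * θ ω ∂s.totalVariation := by
  classical
  obtain ⟨u, hu, hpos, hneg⟩ := s.toJordanDecomposition.mutuallySingular
  let θ : Ω → ℝ := u.piecewise (fun _ => -1) (fun _ => 1)
  have hθm : Measurable θ := measurable_const.piecewise hu measurable_const
  have hθ : ∀ ω, |θ ω| = 1 := fun ω => by by_cases h : ω ∈ u <;> simp [θ, h]
  refine ⟨θ, hθm, hθ, fun f A hf => ?_⟩
  have hfθ : Integrable (fun ω => f ω * θ ω) s.totalVariation :=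
    hf.mul_bdd (c := 1) hθm.aestronglyMeasurable
      (Eventually.of_forall fun ω => by rw [Real.norm_eq_abs, hθ])
  rw [SignedMeasure.totalVariation, integrable_add_measure] at hfθ
  rw [SignedMeasure.totalVariation, Measure.restrict_add,
    integral_add_measure hfθ.1.restrict hfθ.2.restrict, sIntegral, sub_eq_add_neg, ← integral_neg]
  congr 1 <;> refine integral_congr_ae (ae_restrict_of_ae ?_)
  · filter_upwards [measure_eq_zero_iff_ae_notMem.mp hpos] with ω hω
    simp [θ, hω]
  · filter_upwards [measure_eq_zero_iff_ae_notMem.mp hneg] with ω hω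
    simp [θ, Set.notMem_compl_iff.mp hω]

theorem sIntegral_one (s : SignedMeasure Ω) {A : Set Ω} (hA : MeasurableSet A) :
    sIntegral s (fun _ => 1) A = s A := by
  conv_rhs => rw [← SignedMeasure.toSignedMeasure_toJordanDecomposition s]
  rw [JordanDecomposition.toSignedMeasure, _root_.sub_apply,
    Measure.toSignedMeasure_apply_measurable hA, Measure.toSignedMeasure_apply_measurable hA]
  simp [sIntegral]

theorem norm_le_of_forall_dual_le {v : X} {M : ℝ}
    (h : ∀ x : X →L[ℝ] ℝ, ‖x‖ ≤ 1 → |x v| ≤ M) : ‖v‖ ≤ M := by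
  obtain ⟨x, hx, hxv⟩ := exists_dual_vector'' ℝ v
  simpa [hxv] using h x hx

theorem abs_dual_apply_le_norm {x : X →L[ℝ] ℝ} (hx : ‖x‖ ≤ 1) (v : X) : |x v| ≤ ‖v‖ := by
  simpa using x.le_of_opNorm_le hx v

theorem integral_abs_indicator {ν : Measure Ω} {P : Set Ω} (hP : MeasurableSet P) (f : Ω → ℝ) :
    ∫ ω, |P.indicator f ω| ∂ν = ∫ ω in P, |f ω| ∂ν := by
  simpa only [← Real.norm_eq_abs, norm_indicator_eq_indicator_norm] using integral_indicator hP

section VectorIntegral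

variable {m : VectorMeasure Ω X} {f g h : Ω → ℝ} {A P : Set Ω}

theorem MIntegrable.apply_mIntegral (hf : MIntegrable m f) (hA : MeasurableSet A)
    (x : X →L[ℝ] ℝ) : x (mIntegral m f A) = sIntegral (dualApply m x) f A := by
  rw [mIntegral, dif_pos (hf.2.2 A hA)]
  exact (hf.2.2 A hA).choose_spec x

theorem MIntegrable.abs_apply_mIntegral_le (hf : MIntegrable m f) (hA : MeasurableSet A)
    (x : X →L[ℝ] ℝ) :
    |x (mIntegral m f A)| ≤ ∫ ω in A, |f ω| ∂(dualApply m x).totalVariation := by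
  obtain ⟨θ, -, hθ, hsign⟩ := exists_sIntegral_eq_setIntegral_mul (dualApply m x)
  rw [hf.apply_mIntegral hA, hsign f A (hf.2.1 x)]
  refine abs_integral_le_integral_abs.trans_eq ?_
  simp only [abs_mul, hθ, mul_one]

theorem MIntegrable.exists_setIntegral_abs_le (hf : MIntegrable m f) (hP : MeasurableSet P)
    (x : X →L[ℝ] ℝ) :
    ∃ A ⊆ P, MeasurableSet A ∧
      ∫ ω in P, |f ω| ∂(dualApply m x).totalVariation ≤ 2 * |x (mIntegral m f A)| := by
  obtain ⟨θ, hθm, hθ, hsign⟩ := exists_sIntegral_eq_setIntegral_mul (dualApply m x)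
  have hint := hf.2.1 x
  have habs : ∀ ω, |f ω| = |f ω * θ ω| := fun ω => by rw [abs_mul, hθ, mul_one]
  let T : Set Ω := {ω | 0 ≤ f ω * θ ω}
  have hT : MeasurableSet T := measurableSet_le measurable_const (hf.1.mul hθm)
  have hpos : ∫ ω in P ∩ T, |f ω| ∂(dualApply m x).totalVariation =
      x (mIntegral m f (P ∩ T)) := by
    rw [hf.apply_mIntegral (hP.inter hT), hsign f _ hint]
    exact setIntegral_congr_fun (hP.inter hT) fun ω hω => (habs ω).trans (abs_of_nonneg hω.2)
  have hneg : ∫ ω in P \ T, |f ω| ∂(dualApply m x).totalVariation =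
      -x (mIntegral m f (P \ T)) := by
    rw [hf.apply_mIntegral (hP.diff hT), hsign f _ hint, ← integral_neg]
    exact setIntegral_congr_fun (hP.diff hT) fun ω hω =>
      (habs ω).trans (abs_of_neg (not_le.mp hω.2))
  have hsum := integral_inter_add_sdiff hT (hint.abs.integrableOn (s := P))
  have hposle := le_abs_self (x (mIntegral m f (P ∩ T)))
  have hnegle := neg_le_abs (x (mIntegral m f (P \ T)))
  rcases le_total |x (mIntegral m f (P ∩ T))| |x (mIntegral m f (P \ T))| with hle | hle
  · exact ⟨P \ T, Set.sdiff_subset, hP.diff hT, by linarith⟩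
  · exact ⟨P ∩ T, Set.inter_subset_left, hP.inter hT, by linarith⟩

theorem MIntegrable.exists_norm_mIntegral_le (hf : MIntegrable m f) :
    ∃ C : ℝ, ∀ A, MeasurableSet A → ‖mIntegral m f A‖ ≤ C := by
  obtain ⟨C, hC⟩ : ∃ C, ∀ A : {A : Set Ω // MeasurableSet A},
      ‖NormedSpace.inclusionInDoubleDualLi ℝ (mIntegral m f A.1)‖ ≤ C :=
    banach_steinhaus fun x => ⟨∫ ω, |f ω| ∂(dualApply m x).totalVariation, fun A =>
      (hf.abs_apply_mIntegral_le A.2 x).trans (setIntegral_le_integral (hf.2.1 x).abs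
        (Eventually.of_forall fun _ => abs_nonneg _))⟩
  exact ⟨C, fun A hA => (LinearIsometry.norm_map _ _).symm.trans_le (hC ⟨A, hA⟩)⟩

theorem MIntegrable.integral_abs_le_mNorm (hf : MIntegrable m f) {x : X →L[ℝ] ℝ}
    (hx : ‖x‖ ≤ 1) : ∫ ω, |f ω| ∂(dualApply m x).totalVariation ≤ mNorm m f := by
  obtain ⟨C, hC⟩ := hf.exists_norm_mIntegral_le
  refine le_ciSup (f := fun x : {x : X →L[ℝ] ℝ // ‖x‖ ≤ 1} =>
    ∫ ω, |f ω| ∂(dualApply m x.1).totalVariation) ⟨2 * C, ?_⟩ ⟨x, hx⟩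
  rintro _ ⟨⟨y, hy⟩, rfl⟩
  obtain ⟨A, -, hA, hle⟩ := hf.exists_setIntegral_abs_le MeasurableSet.univ y
  rw [Measure.restrict_univ] at hle
  linarith [abs_dual_apply_le_norm hy (mIntegral m f A), hC A hA]

theorem mNorm_le {c : ℝ}
    (h : ∀ x : X →L[ℝ] ℝ, ‖x‖ ≤ 1 → ∫ ω, |f ω| ∂(dualApply m x).totalVariation ≤ c) :
    mNorm m f ≤ c :=
  have : Nonempty {x : X →L[ℝ] ℝ // ‖x‖ ≤ 1} := ⟨⟨0, by simp⟩⟩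
  ciSup_le fun x => h x.1 x.2

theorem mNorm_le_add (hg : MIntegrable m g) (hh : MIntegrable m h)
    (hle : ∀ ω, |f ω| ≤ |g ω| + |h ω|) : mNorm m f ≤ mNorm m g + mNorm m h := by
  refine mNorm_le fun x hx => ?_
  calc
    ∫ ω, |f ω| ∂(dualApply m x).totalVariation
        ≤ ∫ ω, (|g ω| + |h ω|) ∂(dualApply m x).totalVariation :=
      integral_mono_of_nonneg (Eventually.of_forall fun _ => abs_nonneg _)
        ((hg.2.1 x).abs.add (hh.2.1 x).abs) (Eventually.of_forall hle)
    _ = (∫ ω, |g ω| ∂(dualApply m x).totalVariation) +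
        ∫ ω, |h ω| ∂(dualApply m x).totalVariation :=
      integral_add (hg.2.1 x).abs (hh.2.1 x).abs
    _ ≤ mNorm m g + mNorm m h :=
      add_le_add (hg.integral_abs_le_mNorm hx) (hh.integral_abs_le_mNorm hx)

theorem mNorm_le_mul (hg : MIntegrable m g) {c : ℝ} (hc : 0 ≤ c)
    (hle : ∀ ω, |f ω| ≤ c * |g ω|) : mNorm m f ≤ c * mNorm m g := by
  refine mNorm_le fun x hx => ?_
  calc
    ∫ ω, |f ω| ∂(dualApply m x).totalVariation
        ≤ ∫ ω, c * |g ω| ∂(dualApply m x).totalVariation :=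
      integral_mono_of_nonneg (Eventually.of_forall fun _ => abs_nonneg _)
        ((hg.2.1 x).abs.const_mul c) (Eventually.of_forall hle)
    _ = c * ∫ ω, |g ω| ∂(dualApply m x).totalVariation := integral_const_mul _ _
    _ ≤ c * mNorm m g := mul_le_mul_of_nonneg_left (hg.integral_abs_le_mNorm hx) hc

theorem mNorm_mono (hg : MIntegrable m g) (hle : ∀ ω, |f ω| ≤ |g ω|) : mNorm m f ≤ mNorm m g := by
  simpa using mNorm_le_mul hg zero_le_one (by simpa using hle)

theorem MIntegrable.norm_sum_smul_mIntegral_le (hf : MIntegrable m f) {ι : Type*} {s : Finset ι}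
    {A : ι → Set Ω} (hA : ∀ j, MeasurableSet (A j))
    (hdisj : Pairwise (Function.onFun Disjoint A)) {θ : ι → ℝ} (hθ : ∀ j, |θ j| ≤ 1) :
    ‖∑ j ∈ s, θ j • mIntegral m f (A j)‖ ≤ mNorm m f := by
  refine norm_le_of_forall_dual_le fun x hx => ?_
  calc
    |x (∑ j ∈ s, θ j • mIntegral m f (A j))| ≤ ∑ j ∈ s, |θ j| * |x (mIntegral m f (A j))| := by
      simpa only [map_sum, map_smul, smul_eq_mul, abs_mul] using
        Finset.abs_sum_le_sum_abs (fun j => θ j * x (mIntegral m f (A j))) s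
    _ ≤ ∑ j ∈ s, ∫ ω in A j, |f ω| ∂(dualApply m x).totalVariation :=
      Finset.sum_le_sum fun j _ => (mul_le_of_le_one_left (abs_nonneg _) (hθ j)).trans
        (hf.abs_apply_mIntegral_le (hA j) x)
    _ = ∫ ω in ⋃ j ∈ s, A j, |f ω| ∂(dualApply m x).totalVariation :=
      (integral_biUnion_finset s (fun j _ => hA j) (fun i _ j _ hij => hdisj hij)
        fun j _ => (hf.2.1 x).abs.integrableOn).symm
    _ ≤ ∫ ω, |f ω| ∂(dualApply m x).totalVariation :=
      setIntegral_le_integral (hf.2.1 x).abs (Eventually.of_forall fun _ => abs_nonneg _)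
    _ ≤ mNorm m f := hf.integral_abs_le_mNorm hx

theorem MIntegrable.norm_mIntegral_le_mNorm (hf : MIntegrable m f) (hA : MeasurableSet A) :
    ‖mIntegral m f A‖ ≤ mNorm m f := by
  simpa using hf.norm_sum_smul_mIntegral_le (s := Finset.univ) (fun _ : Unit => hA)
    (fun i j hij => (hij (Subsingleton.elim i j)).elim) (θ := 1) (by simp)

theorem MIntegrable.exists_lt_norm_mIntegral (hf : MIntegrable m f) (hP : MeasurableSet P)
    {c : ℝ} (hc : c < mNorm m (P.indicator f)) :
    ∃ A ⊆ P, MeasurableSet A ∧ c / 2 < ‖mIntegral m f A‖ := by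
  contrapose! hc
  refine mNorm_le fun x hx => ?_
  obtain ⟨A, hAP, hA, hle⟩ := hf.exists_setIntegral_abs_le hP x
  rw [integral_abs_indicator hP]
  linarith [abs_dual_apply_le_norm hx (mIntegral m f A), hc A hAP hA]

theorem MIntegrable.integral_abs_le (hf : MIntegrable m f) (x : X →L[ℝ] ℝ) :
    ∫ ω, |f ω| ∂(dualApply m x).totalVariation ≤ 2 * (‖x‖ * mNorm m f) := by
  obtain ⟨A, -, hA, hle⟩ := hf.exists_setIntegral_abs_le MeasurableSet.univ x
  rw [Measure.restrict_univ] at hle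
  refine hle.trans (mul_le_mul_of_nonneg_left ?_ zero_le_two)
  exact (x.le_opNorm _).trans
    (mul_le_mul_of_nonneg_left (hf.norm_mIntegral_le_mNorm hA) (norm_nonneg x))

theorem MIntegrable.totalVariation_lt_le (hf : MIntegrable m f) (x : X →L[ℝ] ℝ) {c : ℝ}
    (hc : 0 < c) :
    (dualApply m x).totalVariation {ω | c < |f ω|} ≤
      ENNReal.ofReal (2 * (‖x‖ * mNorm m f) / c) := by
  have hmarkov : c * (dualApply m x).totalVariation.real {ω | c ≤ |f ω|} ≤
      2 * (‖x‖ * mNorm m f) :=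
    (mul_meas_ge_le_integral_of_nonneg (Eventually.of_forall fun _ => abs_nonneg _)
      (hf.2.1 x).abs c).trans (hf.integral_abs_le x)
  calc
    (dualApply m x).totalVariation {ω | c < |f ω|}
        ≤ (dualApply m x).totalVariation {ω | c ≤ |f ω|} :=
      measure_mono (Set.ofPred_subset_ofPred.mpr fun _ => le_of_lt)
    _ = ENNReal.ofReal ((dualApply m x).totalVariation.real {ω | c ≤ |f ω|}) :=
      (ofReal_measureReal).symm
    _ ≤ ENNReal.ofReal (2 * (‖x‖ * mNorm m f) / c) :=
      ENNReal.ofReal_le_ofReal ((le_div_iff₀' hc).mpr hmarkov)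

theorem MIntegrable.indicator (hf : MIntegrable m f) (hP : MeasurableSet P) :
    MIntegrable m (P.indicator f) := by
  refine ⟨hf.1.indicator hP, fun x => (hf.2.1 x).indicator hP, fun A hA =>
    ⟨mIntegral m f (A ∩ P), fun x => ?_⟩⟩
  simp only [hf.apply_mIntegral (hA.inter hP), sIntegral, setIntegral_indicator hP]

theorem MIntegrable.one (m : VectorMeasure Ω X) : MIntegrable m fun _ => 1 :=
  ⟨measurable_const, fun _ => integrable_const 1, fun A hA =>
    ⟨m A, fun x => (sIntegral_one (dualApply m x) hA).symm⟩⟩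

theorem mIntegral_one (m : VectorMeasure Ω X) (hA : MeasurableSet A) :
    mIntegral m (fun _ => 1) A = m A :=
  (SeparatingDual.eq_iff_forall_dual_eq (R := ℝ)).mpr fun x =>
    ((MIntegrable.one m).apply_mIntegral hA x).trans (sIntegral_one (dualApply m x) hA)

theorem MIntegrable.norm_map_mIntegral_le (hf : MIntegrable m f) (hA : MeasurableSet A)
    {Y : Type*} [NormedAddCommGroup Y] [NormedSpace ℝ Y] (L : X →L[ℝ] Y) {k c : ℝ} (hk : 0 ≤ k)
    (hfk : ∀ ω ∈ A, |f ω| ≤ k) (hL : ∀ G, MeasurableSet G → ‖L (m G)‖ ≤ c) :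
    ‖L (mIntegral m f A)‖ ≤ k * (2 * c) := by
  refine norm_le_of_forall_dual_le fun y hy => ?_
  obtain ⟨G, -, hG, hGle⟩ := (MIntegrable.one m).exists_setIntegral_abs_le hA (y.comp L)
  rw [mIntegral_one m hG] at hGle
  calc
    |(y.comp L) (mIntegral m f A)|
        ≤ ∫ ω in A, |f ω| ∂(dualApply m (y.comp L)).totalVariation :=
      hf.abs_apply_mIntegral_le hA _
    _ ≤ ∫ _ in A, k * |(1 : ℝ)| ∂(dualApply m (y.comp L)).totalVariation :=
      setIntegral_mono_on (hf.2.1 _).abs.integrableOn (integrable_const _).integrableOn hA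
        (by simpa using hfk)
    _ = k * ∫ _ in A, |(1 : ℝ)| ∂(dualApply m (y.comp L)).totalVariation := integral_const_mul _ _
    _ ≤ k * (2 * |y (L (m G))|) := mul_le_mul_of_nonneg_left hGle hk
    _ ≤ k * (2 * c) := by
      gcongr
      exact (abs_dual_apply_le_norm hy _).trans (hL G hG)

end VectorIntegral

/-! ### Absolute continuity and truncation in `L¹(m)` -/

theorem exists_strictMono_forall_rel_succ {r : ℕ → ℕ → Prop} (h : ∀ k, ∃ j > k, r k j) :
    ∃ κ : ℕ → ℕ, StrictMono κ ∧ ∀ i, r (κ i) (κ (i + 1)) := by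
  choose next hlt hr using h
  have hsucc : ∀ i, next^[i + 1] 0 = next (next^[i] 0) := fun i =>
    Function.iterate_succ_apply' next i 0
  refine ⟨fun i => next^[i] 0, strictMono_nat_of_lt_succ fun i => ?_, fun i => ?_⟩
  · exact (hlt _).trans_eq (hsucc i).symm
  · simpa only [hsucc] using hr (next^[i] 0)

theorem pairwise_disjoint_sdiff_succ {α : Type*} {U : ℕ → Set α} (hU : Antitone U) :
    Pairwise (Function.onFun Disjoint fun i => U i \ U (i + 1)) :=
  (pairwise_disjoint_on _).mpr fun _ _ hij =>
    Set.disjoint_left.mpr fun _ hi hj => hi.2 (hU hij hj.1)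

theorem antitone_iUnion_add {α : Type*} (A : ℕ → Set α) : Antitone fun n => ⋃ i, A (i + n) := by
  intro k l hkl
  refine Set.iUnion_subset fun i => ?_
  obtain ⟨d, rfl⟩ := Nat.exists_eq_add_of_le' hkl
  rw [← add_assoc]
  exact Set.subset_iUnion (fun i => A (i + k)) (i + d)

theorem subset_iUnion_add {α : Type*} (A : ℕ → Set α) (n : ℕ) : A n ⊆ ⋃ i, A (i + n) := by
  simpa using Set.subset_iUnion (fun i => A (i + n)) 0

theorem tendsto_measure_iUnion_add {η : Measure Ω} {A : ℕ → Set Ω} (hA : ∑' i, η (A i) ≠ ∞) :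
    Tendsto (fun n => η (⋃ i, A (i + n))) atTop (𝓝 0) :=
  tendsto_of_tendsto_of_tendsto_of_le_of_le tendsto_const_nhds
    (ENNReal.tendsto_sum_nat_add (fun i => η (A i)) hA) (fun _ => zero_le)
    fun _ => measure_iUnion_le _

theorem exists_mNorm_indicator_sdiff_gt {m : VectorMeasure Ω X} {f : Ω → ℝ} (hf : MIntegrable m f)
    {T : ℕ → Set Ω} (hTm : ∀ k, MeasurableSet (T k)) (hT : Antitone T)
    (hnull : semivar m (⋂ k, T k) = 0) {k : ℕ} {ε : ℝ} (hk : ε < mNorm m ((T k).indicator f)) :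
    ∃ j > k, ε < mNorm m ((T k \ T j).indicator f) := by
  obtain ⟨x, hx, hxk⟩ : ∃ x : X →L[ℝ] ℝ, ‖x‖ ≤ 1 ∧
      ε < ∫ ω in T k, |f ω| ∂(dualApply m x).totalVariation := by
    contrapose! hk
    exact mNorm_le fun x hx => (integral_abs_indicator (hTm k) f).trans_le (hk x hx)
  have hint : Integrable (fun ω => |f ω|) (dualApply m x).totalVariation := (hf.2.1 x).abs
  have hxnull : (dualApply m x).totalVariation (⋂ k, T k) = 0 :=
    le_antisymm (hnull ▸ le_iSup (fun x : {x : X →L[ℝ] ℝ // ‖x‖ ≤ 1} =>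
      (dualApply m x.1).totalVariation (⋂ k, T k)) ⟨x, hx⟩) zero_le
  have hlim := tendsto_setIntegral_of_antitone hTm hT ⟨0, hint.integrableOn (s := T 0)⟩
  rw [setIntegral_measure_zero _ hxnull] at hlim
  obtain ⟨j, hj, hkj⟩ :=
    ((hlim.eventually_lt_const (sub_pos.mpr hxk)).and (eventually_gt_atTop k)).exists
  refine ⟨j, hkj, ?_⟩
  calc
    ε < (∫ ω in T k, |f ω| ∂(dualApply m x).totalVariation) -
        ∫ ω in T j, |f ω| ∂(dualApply m x).totalVariation := by linarith
    _ = ∫ ω, |(T k \ T j).indicator f ω| ∂(dualApply m x).totalVariation := by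
      rw [integral_abs_indicator ((hTm k).diff (hTm j)),
        setIntegral_sdiff (hTm j) hint.integrableOn (hT hkj.le)]
    _ ≤ mNorm m ((T k \ T j).indicator f) :=
      (hf.indicator ((hTm k).diff (hTm j))).integral_abs_le_mNorm hx

theorem unifAC_range_mIntegral_of_abs_le {B : BFS S μ X} {m : VectorMeasure Ω X}
    {F : ℕ → Ω → ℝ}
    (hrange : B.UnifAC {x : X | ∃ A : Set Ω, MeasurableSet A ∧ m A = x})
    (hF : ∀ n, MIntegrable m (F n)) {A : ℕ → Set Ω} (hA : ∀ n, MeasurableSet (A n)) {k : ℝ}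
    (hk : ∀ n, ∀ ω ∈ A n, |F n ω| ≤ k) :
    B.UnifAC (Set.range fun n => mIntegral m (F n) (A n)) := by
  rw [B.unifAC_iff] at hrange ⊢
  intro ε hε
  obtain ⟨δ, hδ, hac⟩ := hrange (ε / (2 * (|k| + 1))) (by positivity)
  refine ⟨δ, hδ, ?_⟩
  rintro E hE hμE _ ⟨n, rfl⟩
  have hbound : ∀ ω ∈ A n, |F n ω| ≤ |k| + 1 := fun ω hω => by
    linarith [hk n ω hω, le_abs_self k]
  refine ((hF n).norm_map_mIntegral_le (hA n) (B.restrict hE) (by positivity) hbound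
    fun G hG => hac E hE hμE (m G) ⟨G, hG, rfl⟩).trans_eq ?_
  field_simp

section SubsequenceSplitting

variable [IsFiniteMeasure μ] {B : BFS S μ X} {m : VectorMeasure Ω X} {f : Ω → ℝ}
  {F : ℕ → Ω → ℝ} {C ε : ℝ}

theorem BFS.SSP.exists_norm_mIntegral_lt (hX : B.SSP) (hF : ∀ n, MIntegrable m (F n))
    (hC : ∀ n, mNorm m (F n) ≤ C) {A : ℕ → ℕ → Set Ω} (hA : ∀ n j, MeasurableSet (A n j))
    (hdisj : ∀ n, Pairwise (Function.onFun Disjoint (A n)))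
    (hcols : ∀ j, B.UnifAC (Set.range fun n => mIntegral m (F n) (A n j))) (hε : 0 < ε) :
    ∃ n, ∃ j < n, ‖mIntegral m (F n) (A n j)‖ < ε :=
  hX.exists_norm_lt_of_norm_sum_le (fun n _ hθ =>
    ((hF n).norm_sum_smul_mIntegral_le (hA n) (hdisj n) fun j => (hθ j).le).trans (hC n)) hcols hε

theorem BFS.SSP.exists_mNorm_indicator_le (hX : B.SSP) (hf : MIntegrable m f) {P : ℕ → Set Ω}
    (hP : ∀ j, MeasurableSet (P j)) (hdisj : Pairwise (Function.onFun Disjoint P)) (hε : 0 < ε) :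
    ∃ j, mNorm m ((P j).indicator f) ≤ ε := by
  by_contra! hlarge
  choose A hAP hA hlt using fun j => hf.exists_lt_norm_mIntegral (hP j) (hlarge j)
  obtain ⟨_, j, -, hj⟩ := hX.exists_norm_mIntegral_lt (fun _ => hf) (fun _ => le_rfl)
    (A := fun _ => A) (fun _ => hA) (fun _ i j hij => (hdisj hij).mono (hAP i) (hAP j))
    (fun j => Set.range_const (ι := ℕ) ▸ hX.unifAC_singleton _) (half_pos hε)
  exact (hlt j).not_gt hj

theorem BFS.SSP.exists_mNorm_indicator_antitone_le (hX : B.SSP) (hf : MIntegrable m f)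
    {T : ℕ → Set Ω} (hTm : ∀ k, MeasurableSet (T k)) (hT : Antitone T)
    (hnull : semivar m (⋂ k, T k) = 0) (hε : 0 < ε) :
    ∃ k, mNorm m ((T k).indicator f) ≤ ε := by
  by_contra! hlarge
  obtain ⟨κ, hκ, hlt⟩ := exists_strictMono_forall_rel_succ fun k =>
    exists_mNorm_indicator_sdiff_gt hf hTm hT hnull (hlarge k)
  obtain ⟨i, hi⟩ := hX.exists_mNorm_indicator_le hf (fun i => (hTm (κ i)).diff (hTm (κ (i + 1))))
    (pairwise_disjoint_sdiff_succ (hT.comp_monotone hκ.monotone)) hε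
  exact (hlt i).not_ge hi

theorem BFS.SSP.unifACNorm_singleton (hX : B.SSP) {η : Measure Ω}
    (hη : ∀ A, MeasurableSet A → η A = 0 → semivar m A = 0) (hf : MIntegrable m f) :
    UnifACNorm η (mNorm m) {f} := by
  intro ε hε
  by_contra! hlarge
  obtain ⟨δ, hδ, hδsum⟩ := ENNReal.exists_pos_sum_of_countable one_ne_zero ℕ
  choose A hA hAη g hg hlt using fun i => hlarge (δ i) (by exact_mod_cast hδ i)
  obtain rfl : g = fun _ => f := funext hg
  have hsum : ∑' i, η (A i) ≠ ∞ :=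
    ne_top_of_le_ne_top hδsum.ne_top <| ENNReal.tsum_le_tsum fun i => by
      simpa only [ENNReal.ofReal_coe_nnreal] using (hAη i).le
  have hTm : ∀ k, MeasurableSet (⋃ i, A (i + k)) := fun k => .iUnion fun i => hA (i + k)
  have hnull : η (⋂ k, ⋃ i, A (i + k)) = 0 :=
    le_antisymm (ge_of_tendsto' (tendsto_measure_iUnion_add hsum) fun k =>
      measure_mono (Set.iInter_subset _ k)) zero_le
  obtain ⟨k, hk⟩ := hX.exists_mNorm_indicator_antitone_le hf hTm (antitone_iUnion_add A)
    (hη _ (.iInter hTm) hnull) hε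
  refine (hlt k).not_ge ((mNorm_mono (hf.indicator (hTm k)) fun ω => ?_).trans hk)
  exact norm_indicator_le_of_subset (subset_iUnion_add A k) f ω

theorem BFS.SSP.exists_mNorm_indicator_le_of_abs_le (hX : B.SSP)
    (hrange : B.UnifAC {x : X | ∃ A : Set Ω, MeasurableSet A ∧ m A = x})
    (hF : ∀ n, MIntegrable m (F n)) (hC : ∀ n, mNorm m (F n) ≤ C) {P : ℕ → ℕ → Set Ω}
    (hP : ∀ n j, MeasurableSet (P n j)) (hdisj : ∀ n, Pairwise (Function.onFun Disjoint (P n)))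
    {κ : ℕ → ℝ} (hκ : ∀ n j, ∀ ω ∈ P n j, |F n ω| ≤ κ j) (hε : 0 < ε) :
    ∃ n, ∃ j < n, mNorm m ((P n j).indicator (F n)) ≤ ε := by
  by_contra! hlarge
  have hexists : ∀ n j, ∃ A ⊆ P n j, MeasurableSet A ∧
      (j < n → ε / 2 < ‖mIntegral m (F n) A‖) := fun n j => by
    by_cases hj : j < n
    · obtain ⟨A, hAP, hA, hlt⟩ := (hF n).exists_lt_norm_mIntegral (hP n j) (hlarge n j hj)
      exact ⟨A, hAP, hA, fun _ => hlt⟩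
    · exact ⟨∅, Set.empty_subset _, .empty, fun h => absurd h hj⟩
  choose A hAP hA hlt using hexists
  obtain ⟨n, j, hjn, hj⟩ := hX.exists_norm_mIntegral_lt hF hC hA
    (fun n i j hij => (hdisj n hij).mono (hAP n i) (hAP n j))
    (fun j => unifAC_range_mIntegral_of_abs_le hrange hF (fun n => hA n j)
      fun n ω hω => hκ n j ω (hAP n j hω)) (half_pos hε)
  exact (hlt n j hjn).not_gt hj

/-- If every truncation level `k` failed, an ultrafilter would produce levels `κ j` and, for every
`N`, one function whose slices between consecutive levels are all large up to `N`. -/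
theorem BFS.SSP.exists_eventually_mNorm_Ioc_le (hX : B.SSP)
    (hrange : B.UnifAC {x : X | ∃ A : Set Ω, MeasurableSet A ∧ m A = x}) {ι : Type*}
    (𝓤 : Ultrafilter ι) {f : ι → Ω → ℝ} (hf : ∀ n, MIntegrable m (f n))
    (hC : ∀ n, mNorm m (f n) ≤ C) (hε : 0 < ε) :
    ∃ k : ℕ, ∀ K : ℕ, ∀ᶠ n in 𝓤,
      mNorm m (((fun ω => |f n ω|) ⁻¹' Set.Ioc (k : ℝ) K).indicator (f n)) ≤ ε := by
  by_contra! hcon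
  have hlarge : ∀ k : ℕ, ∃ K > k, ∀ᶠ n in 𝓤,
      ε < mNorm m (((fun ω => |f n ω|) ⁻¹' Set.Ioc (k : ℝ) K).indicator (f n)) := by
    intro k
    obtain ⟨K, hK⟩ := hcon k
    refine ⟨K, ?_, hK⟩
    by_contra! hKk
    obtain ⟨n, hn⟩ := hK.exists
    have hempty : Set.Ioc (k : ℝ) K = ∅ := Set.Ioc_eq_empty (by simpa using hKk)
    rw [hempty, Set.preimage_empty, Set.indicator_empty] at hn
    exact hn.not_ge (mNorm_le fun x _ => by simpa using hε.le)
  obtain ⟨κ, hκ, hslices⟩ := exists_strictMono_forall_rel_succ hlarge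
  choose p hp using fun N : ℕ =>
    ((eventually_all_finset (Finset.range N)).mpr fun j _ => hslices j).exists
  have hmono : Monotone fun j => (κ j : ℝ) := fun i j hij => Nat.cast_le.mpr (hκ.monotone hij)
  obtain ⟨N, j, hj, hle⟩ := hX.exists_mNorm_indicator_le_of_abs_le hrange
    (fun N => hf (p N)) (fun N => hC (p N))
    (P := fun N j => (fun ω => |f (p N) ω|) ⁻¹' Set.Ioc (κ j : ℝ) (κ (j + 1)))
    (fun N j => (hf (p N)).1.abs measurableSet_Ioc)
    (fun N i j hij => (hmono.pairwise_disjoint_on_Ioc_succ hij).preimage _)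
    (fun N j ω hω => hω.2) hε
  exact (hp N j (Finset.mem_range.mpr hj)).not_ge hle

theorem BFS.SSP.exists_strictMono_mNorm_Ioc_le (hX : B.SSP)
    (hrange : B.UnifAC {x : X | ∃ A : Set Ω, MeasurableSet A ∧ m A = x})
    (hF : ∀ n, MIntegrable m (F n)) (hC : ∀ n, mNorm m (F n) ≤ C) (K : ℕ → ℕ) :
    ∃ σ : ℕ → ℕ, StrictMono σ ∧ ∀ ε : ℝ, 0 < ε → ∃ k : ℕ, ∀ᶠ l in atTop,
      mNorm m (((fun ω => |F (σ l) ω|) ⁻¹' Set.Ioc (k : ℝ) (K l)).indicator (F (σ l))) ≤ ε := by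
  choose k hk using fun i : ℕ =>
    hX.exists_eventually_mNorm_Ioc_le hrange (hyperfilter ℕ) hF hC (pow_pos one_half_pos i)
  obtain ⟨σ, hσ, hle⟩ := extraction_forall_of_frequently fun l =>
    ((eventually_all_finset (Finset.range (l + 1))).mpr
      fun i _ => hk i (K l)).frequently.filter_mono Nat.hyperfilter_le_atTop
  refine ⟨σ, hσ, fun ε hε => ?_⟩
  obtain ⟨i, hi⟩ := exists_pow_lt_of_lt_one hε (one_half_lt_one (α := ℝ))
  refine ⟨k i, ?_⟩
  filter_upwards [eventually_ge_atTop i] with l hl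
  exact (hle l i (Finset.mem_range_succ_iff.mpr hl)).trans hi.le

end SubsequenceSplitting

/-! ### The splitting -/

theorem pairwise_disjoint_sdiff_iUnion_add {α : Type*} (T : ℕ → Set α) {τ : ℕ → ℕ}
    (hτ : StrictMono τ) :
    Pairwise (Function.onFun Disjoint fun l => T (τ l) \ ⋃ i, T (i + τ (l + 1))) :=
  fun _ _ hij => (pairwise_disjoint_sdiff_succ
    ((antitone_iUnion_add T).comp_monotone hτ.monotone) hij).mono
      (Set.sdiff_subset_sdiff_left (subset_iUnion_add T _))
      (Set.sdiff_subset_sdiff_left (subset_iUnion_add T _))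

theorem indicator_mul_indicator_eq_zero {α : Type*} {P Q : Set α} (h : Disjoint P Q)
    (f g : α → ℝ) : (fun a => P.indicator f a * Q.indicator g a) = 0 := by
  funext a
  by_cases ha : a ∈ P
  · simp [Set.disjoint_left.mp h ha]
  · simp [ha]

theorem unifACNorm_range_of_eventually {η : Measure Ω} {nrm : (Ω → ℝ) → ℝ} {g : ℕ → Ω → ℝ}
    (hsingle : ∀ l, UnifACNorm η nrm {g l})
    (h : ∀ ε : ℝ, 0 < ε → ∃ δ : ℝ, 0 < δ ∧ ∀ᶠ l in atTop, ∀ A, MeasurableSet A →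
      η A < ENNReal.ofReal δ → nrm (A.indicator (g l)) ≤ ε) :
    UnifACNorm η nrm (Set.range g) := by
  intro ε hε
  obtain ⟨δ, hδ, hev⟩ := h ε hε
  obtain ⟨L, hL⟩ := eventually_atTop.mp hev
  choose d hd hdle using fun l => hsingle l ε hε
  have hsmall : ∀ᶠ t : ℝ in 𝓝[>] 0, 0 < t ∧ t ≤ δ ∧ ∀ l ∈ Finset.range L, t ≤ d l :=
    eventually_mem_nhdsWithin.and <| (Filter.Eventually.and (eventually_le_nhds hδ)
      ((eventually_all_finset _).mpr fun l _ => eventually_le_nhds (hd l))).filter_mono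
        nhdsWithin_le_nhds
  obtain ⟨t, ht, htδ, htd⟩ := hsmall.exists
  refine ⟨t, ht, ?_⟩
  rintro A hA hηA _ ⟨l, rfl⟩
  rcases lt_or_ge l L with hl | hl
  · exact hdle l A hA (hηA.trans_le (ENNReal.ofReal_le_ofReal (htd l (Finset.mem_range.mpr hl))))
      (g l) rfl
  · exact hL l hl A hA (hηA.trans_le (ENNReal.ofReal_le_ofReal htδ))

theorem MIntegrable.mNorm_indicator_le_add {m : VectorMeasure Ω X} {f : Ω → ℝ}
    (hf : MIntegrable m f) {A : Set Ω} (hA : MeasurableSet A) {c : ℝ} (hc : 0 ≤ c) :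
    mNorm m (A.indicator f) ≤
      mNorm m ({ω | c < |f ω|}.indicator f) + c * mNorm m (A.indicator fun _ => 1) := by
  have hlarge : MeasurableSet {ω | c < |f ω|} := measurableSet_lt measurable_const hf.1.abs
  have hone := (MIntegrable.one m).indicator hA
  calc
    mNorm m (A.indicator f) ≤ mNorm m ({ω | c < |f ω|}.indicator f) +
        mNorm m ((A \ {ω | c < |f ω|}).indicator f) :=
      mNorm_le_add (hf.indicator hlarge) (hf.indicator (hA.diff hlarge)) fun ω => by
        by_cases hω : ω ∈ A <;> by_cases hcω : c < |f ω| <;> simp [hω, hcω]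
    _ ≤ _ := by
      gcongr
      refine mNorm_le_mul hone hc fun ω => ?_
      by_cases hω : ω ∈ A <;> by_cases hcω : c < |f ω| <;> simp [hω, hcω, hc, not_lt.mp]

section Splitting

variable {η : Measure Ω} {m : VectorMeasure Ω X} {F : ℕ → Ω → ℝ}

theorem unifACNorm_range_of_mNorm_lt_le
    (hac : ∀ f, MIntegrable m f → UnifACNorm η (mNorm m) {f}) (hF : ∀ l, MIntegrable m (F l))
    (htail : ∀ ε : ℝ, 0 < ε → ∃ k : ℕ, ∀ᶠ l in atTop,
      mNorm m ({ω | (k : ℝ) < |F l ω|}.indicator (F l)) ≤ ε) :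
    UnifACNorm η (mNorm m) (Set.range F) := by
  refine unifACNorm_range_of_eventually (fun l => hac _ (hF l)) fun ε hε => ?_
  obtain ⟨k, hk⟩ := htail (ε / 2) (half_pos hε)
  obtain ⟨δ, hδ, hone⟩ := hac _ (MIntegrable.one m) (ε / 2 / (k + 1)) (by positivity)
  refine ⟨δ, hδ, ?_⟩
  filter_upwards [hk] with l hl A hA hηA
  calc
    mNorm m (A.indicator (F l))
        ≤ mNorm m ({ω | (k : ℝ) < |F l ω|}.indicator (F l)) +
          k * mNorm m (A.indicator fun _ => 1) := (hF l).mNorm_indicator_le_add hA k.cast_nonneg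
    _ ≤ ε / 2 + k * (ε / 2 / (k + 1)) := by
      gcongr
      exact hone A hA hηA _ rfl
    _ ≤ ε / 2 + (k + 1) * (ε / 2 / (k + 1)) := by
      gcongr
      exact le_add_of_nonneg_right zero_le_one
    _ = ε := by field_simp; norm_num

theorem mNorm_lt_indicator_compl_le {f : Ω → ℝ} (hf : MIntegrable m f) {V : Set Ω}
    (hV : MeasurableSet V) (k K : ℝ) :
    mNorm m ({ω | k < |({ω | K < |f ω|} \ V)ᶜ.indicator f ω|}.indicator
        (({ω | K < |f ω|} \ V)ᶜ.indicator f)) ≤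
      mNorm m (((fun ω => |f ω|) ⁻¹' Set.Ioc k K).indicator f) + mNorm m (V.indicator f) := by
  refine mNorm_le_add (hf.indicator (hf.1.abs measurableSet_Ioc)) (hf.indicator hV) fun ω => ?_
  by_cases hωV : ω ∈ V <;> by_cases hK : K < |f ω| <;> by_cases hk : k < |f ω| <;>
    simp [Set.indicator_apply, hωV, hK, hk, not_lt.mp]

theorem unifACNorm_range_indicator_compl
    (hac : ∀ f, MIntegrable m f → UnifACNorm η (mNorm m) {f}) (hF : ∀ l, MIntegrable m (F l))
    {K : ℕ → ℝ} (hmid : ∀ ε : ℝ, 0 < ε → ∃ k : ℕ, ∀ᶠ l in atTop,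
      mNorm m (((fun ω => |F l ω|) ⁻¹' Set.Ioc (k : ℝ) (K l)).indicator (F l)) ≤ ε)
    {V : ℕ → Set Ω} (hVm : ∀ l, MeasurableSet (V l))
    (hV : ∀ ε : ℝ, 0 < ε → ∀ᶠ l in atTop, mNorm m ((V l).indicator (F l)) ≤ ε) :
    UnifACNorm η (mNorm m)
      (Set.range fun l => ({ω | K l < |F l ω|} \ V l)ᶜ.indicator (F l)) := by
  refine unifACNorm_range_of_mNorm_lt_le hac (fun l => (hF l).indicator
    ((measurableSet_lt measurable_const (hF l).1.abs).diff (hVm l)).compl) fun ε hε => ?_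
  obtain ⟨k, hk⟩ := hmid (ε / 2) (half_pos hε)
  refine ⟨k, ?_⟩
  filter_upwards [hk, hV (ε / 2) (half_pos hε)] with l hmid_le hV_le
  linarith [mNorm_lt_indicator_compl_le (hF l) (hVm l) k (K l)]

theorem tsum_totalVariation_pow_lt_ne_top (hF : ∀ l, MIntegrable m (F l)) {C : ℝ}
    (hC : ∀ l, mNorm m (F l) ≤ C) (x : X →L[ℝ] ℝ) :
    ∑' l, (dualApply m x).totalVariation {ω | 2 ^ l < |F l ω|} ≠ ∞ := by
  have hsum : Summable fun l : ℕ => 2 * (‖x‖ * C) / 2 ^ l := by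
    simpa only [div_eq_mul_inv, one_mul, ← inv_pow] using
      (summable_geometric_two).mul_left (2 * (‖x‖ * C))
  refine ne_top_of_le_ne_top hsum.tsum_ofReal_ne_top (ENNReal.tsum_le_tsum fun l => ?_)
  refine ((hF l).totalVariation_lt_le x (by positivity)).trans (ENNReal.ofReal_le_ofReal ?_)
  gcongr
  exact hC l

theorem exists_strictMono_mNorm_iUnion_le
    (hac : ∀ f, MIntegrable m f → UnifACNorm η (mNorm m) {f}) (hF : ∀ l, MIntegrable m (F l))
    {T : ℕ → Set Ω} (hT : ∀ l, MeasurableSet (T l)) (hsum : ∑' l, η (T l) ≠ ∞) :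
    ∃ τ : ℕ → ℕ, StrictMono τ ∧ ∀ ε : ℝ, 0 < ε → ∀ᶠ l in atTop,
      mNorm m ((⋃ i, T (i + τ (l + 1))).indicator (F (τ l))) ≤ ε := by
  have hnext : ∀ k : ℕ, ∃ j > k,
      mNorm m ((⋃ i, T (i + j)).indicator (F k)) ≤ (1 / 2) ^ k := fun k => by
    obtain ⟨δ, hδ, hle⟩ := hac _ (hF k) ((1 / 2) ^ k) (by positivity)
    obtain ⟨j, hj, hkj⟩ := (((tendsto_measure_iUnion_add hsum).eventually_lt_const
      (ENNReal.ofReal_pos.mpr hδ)).and (eventually_gt_atTop k)).exists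
    exact ⟨j, hkj, hle _ (.iUnion fun i => hT _) hj _ rfl⟩
  obtain ⟨τ, hτ, hle⟩ := exists_strictMono_forall_rel_succ hnext
  refine ⟨τ, hτ, fun ε hε => ?_⟩
  have hpow : Tendsto (fun l => (1 / 2 : ℝ) ^ τ l) atTop (𝓝 0) :=
    (tendsto_pow_atTop_nhds_zero_of_lt_one one_half_pos.le one_half_lt_one).comp hτ.tendsto_atTop
  filter_upwards [hpow.eventually_le_const hε] with l hl
  exact (hle l).trans hl

end Splitting

theorem statement1_general [IsFiniteMeasure μ] {B : BFS S μ X} {m : VectorMeasure Ω X}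
    (hX : B.SSP) (hrange : B.UnifAC {x : X | ∃ A : Set Ω, MeasurableSet A ∧ m A = x})
    (x₀ : X →L[ℝ] ℝ) (hRyb : ∀ A : Set Ω, MeasurableSet A →
      (dualApply m x₀).totalVariation A = 0 → semivar m A = 0) :
    HasSSP ((dualApply m x₀).totalVariation) (MIntegrable m) (mNorm m) := by
  rintro f hf ⟨C, hC⟩
  have hac : ∀ u, MIntegrable m u → UnifACNorm (dualApply m x₀).totalVariation (mNorm m) {u} :=
    fun u hu => hX.unifACNorm_singleton hRyb hu
  obtain ⟨σ, hσ, hmid⟩ := hX.exists_strictMono_mNorm_Ioc_le hrange hf hC fun l => 2 ^ l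
  push_cast at hmid
  let T : ℕ → Set Ω := fun l => {ω | 2 ^ l < |f (σ l) ω|}
  have hT : ∀ l, MeasurableSet (T l) := fun l => measurableSet_lt measurable_const (hf _).1.abs
  obtain ⟨τ, hτ, hV⟩ := exists_strictMono_mNorm_iUnion_le hac (fun l => hf (σ l)) hT
    (tsum_totalVariation_pow_lt_ne_top (fun l => hf (σ l)) (fun l => hC (σ l)) x₀)
  have hVm : ∀ l, MeasurableSet (⋃ i, T (i + τ (l + 1))) := fun l => .iUnion fun i => hT _
  let D : ℕ → Set Ω := fun l => T (τ l) \ ⋃ i, T (i + τ (l + 1))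
  have hD : ∀ l, MeasurableSet (D l) := fun l => (hT (τ l)).diff (hVm l)
  refine ⟨σ ∘ τ, hσ.comp hτ, fun l => (D l)ᶜ.indicator (f (σ (τ l))),
    fun l => (D l).indicator (f (σ (τ l))), fun l => (hf _).indicator (hD l).compl,
    fun l => (hf _).indicator (hD l), fun l => (Set.indicator_compl_add_self _ _).symm,
    fun l => .of_eq (indicator_mul_indicator_eq_zero disjoint_compl_left _ _), ?_,
    fun i j hij => .of_eq (indicator_mul_indicator_eq_zero
      (pairwise_disjoint_sdiff_iUnion_add T hτ hij) _ _)⟩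
  refine unifACNorm_range_indicator_compl hac (fun l => hf (σ (τ l))) (fun ε hε => ?_) hVm hV
  obtain ⟨k, hk⟩ := hmid ε hε
  exact ⟨k, hτ.tendsto_atTop.eventually hk⟩

/-- if `X` and `X*` have the subsequence splitting property and the range of `m`
has uniformly a.c. norm in `X`, then `L¹(m)` (over a Rybakov control measure) has the
subsequence splitting property. -/
theorem statement1
    {S : Type*} [MeasurableSpace S] {μ : Measure S} [IsFiniteMeasure μ]
    {X : Type*} [NormedAddCommGroup X] [NormedSpace ℝ X] [CompleteSpace X]
    (B : BFS S μ X)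
    {Ω : Type*} [MeasurableSpace Ω] (m : VectorMeasure Ω X)
    (hX : B.SSP)
    (B' : BFS S μ (X →L[ℝ] ℝ))
    (hB'rep : ∀ (φ : X →L[ℝ] ℝ) (x : X), φ x = ∫ s, B.J x s * B'.J φ s ∂μ)
    (hXdual : B'.SSP)
    (hrange : B.UnifAC {x : X | ∃ A : Set Ω, MeasurableSet A ∧ m A = x})
    (x₀ : X →L[ℝ] ℝ)
    (hRyb : ∀ A : Set Ω, MeasurableSet A →
      ((dualApply m x₀).totalVariation A = 0 ↔ semivar m A = 0)) :
    HasSSP ((dualApply m x₀).totalVariation) (MIntegrable m) (mNorm m) :=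
  statement1_general hX hrange x₀ fun A hA => (hRyb A hA).mp

end Paper
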